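/- For any finite simple graph G of order n with complement 𝐺̄, the number of dominating sets of G satisfies d(G) = 2^n − N(𝐺̄, 1), where N(𝐺̄, 1) is the number of sets in the neighborhood complex of 𝐺̄. -/

import Mathlib

/- The neighborhood complex of a graph `G`: all subsets of open neighborhoods. -/
open Classical in
noncomputable def nbhdComplex {V : Type*} [Fintype V] (G : SimpleGraph V) :
    Finset (Finset V) :=
  Finset.univ.filter fun X => ∃ v : V, ∀ u ∈ X, G.Adj v u

/- `W` is a dominating set of `G`. -/
def IsDominatingSet {V : Type*} (G : SimpleGraph V) (W : Finset V) : Prop :=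
  ∀ v : V, v ∈ W ∨ ∃ w ∈ W, G.Adj w v

/- The number of dominating sets of `G`. -/
open Classical in
noncomputable def numDomSets {V : Type*} [Fintype V] (G : SimpleGraph V) : ℕ :=
  (Finset.univ.filter fun W : Finset V => IsDominatingSet G W).card

/-!
A vertex set fails to dominate `G` exactly when it misses the closed neighborhood of some vertex
`v`, that is, when it is contained in the open neighborhood of `v` in `Gᶜ`. The neighborhood
complex of `Gᶜ` is therefore the complement of the family of dominating sets of `G`.
-/

lemma not_isDominatingSet_iff_exists_compl_adj {V : Type*} {G : SimpleGraph V} {W : Finset V} :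
    ¬ IsDominatingSet G W ↔ ∃ v : V, ∀ u ∈ W, Gᶜ.Adj v u := by
  simp only [IsDominatingSet, not_forall, not_or, not_exists, not_and]
  refine exists_congr fun v => ⟨fun ⟨hvW, hW⟩ u hu => ?_, fun h => ⟨fun hvW => ?_, fun u hu => ?_⟩⟩
  · exact (G.compl_adj v u).mpr ⟨fun hvu => hvW (hvu ▸ hu), fun hadj => hW u hu hadj.symm⟩
  · exact Gᶜ.irrefl (h v hvW)
  · exact fun hadj => ((G.compl_adj v u).mp (h u hu)).2 hadj.symm

section Fintype

variable {V : Type*} [Fintype V]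

lemma mem_nbhdComplex {G : SimpleGraph V} {X : Finset V} :
    X ∈ nbhdComplex G ↔ ∃ v : V, ∀ u ∈ X, G.Adj v u := by
  simp [nbhdComplex]

lemma mem_nbhdComplex_compl_iff_not_isDominatingSet {G : SimpleGraph V} {W : Finset V} :
    W ∈ nbhdComplex Gᶜ ↔ ¬ IsDominatingSet G W :=
  mem_nbhdComplex.trans not_isDominatingSet_iff_exists_compl_adj.symm

open Classical in
lemma nbhdComplex_compl_eq_filter_not_isDominatingSet (G : SimpleGraph V) :
    nbhdComplex Gᶜ = Finset.univ.filter fun W : Finset V => ¬ IsDominatingSet G W := by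
  ext W
  simp [mem_nbhdComplex_compl_iff_not_isDominatingSet]

lemma numDomSets_add_card_nbhdComplex_compl (G : SimpleGraph V) :
    numDomSets G + (nbhdComplex Gᶜ).card = 2 ^ Fintype.card V := by
  classical
  rw [numDomSets, nbhdComplex_compl_eq_filter_not_isDominatingSet,
    Finset.card_filter_add_card_filter_not, Finset.card_univ, Fintype.card_finset]

end Fintype

theorem numDomSets_eq_two_pow_sub_card_nbhdComplex_compl {V : Type*} [Fintype V]
    (G : SimpleGraph V) :
    (numDomSets G : ℤ) = 2 ^ Fintype.card V - (nbhdComplex Gᶜ).card :=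
  eq_sub_of_add_eq (mod_cast numDomSets_add_card_nbhdComplex_compl G)
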